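/- For every integer n ≥ 1, the number of smooth words of length n over the alphabet [4] equals 2·F_{2n+1}, where F_m denotes the m-th Fibonacci number (F_1 = F_2 = 1). -/

import Mathlib

/-!
Transfer-matrix count. Let `a, b, c, d` be the numbers of smooth words of length `n + 1` over
`Fin 4` with first letter `0, 1, 2, 3`. Deleting the first letter of a longer word
(`swStart_succ`) shows that one step of length replaces these counts by
`a + b, a + b + c, b + c + d, c + d`. All four are `1` for words of length one, so the reversal
symmetry `a = d`, `b = c` persists and the step becomes `(a, b) ↦ (a + b, a + 2 b)`, which is two
steps of the Fibonacci recurrence. Hence `a = F_{2n+1}` and `b = F_{2n+2}` (`swStart_four`), and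
the total `2 (a + b)` is `2 F_{2n+3}`.
-/

open Real Filter Finset

/-- A word of length `n` over a `k`-letter alphabet (represented as `Fin k`,
a relabeling of `{1,…,k}`) is smooth if adjacent letters differ by at most 1. -/
def IsSmooth {n k : ℕ} (σ : Fin n → Fin k) : Prop :=
  ∀ i : ℕ, ∀ hi : i + 1 < n,
    |((σ ⟨i + 1, hi⟩ : ℕ) : ℤ) - ((σ ⟨i, Nat.lt_of_succ_lt hi⟩ : ℕ) : ℤ)| ≤ 1

/-- A word is smooth cyclic if it is smooth and its last and first letters differ
by at most 1. -/
def IsSmoothCyclic {n k : ℕ} (σ : Fin n → Fin k) : Prop :=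
  IsSmooth σ ∧ ∀ h : 0 < n,
    |((σ ⟨n - 1, Nat.sub_lt h Nat.one_pos⟩ : ℕ) : ℤ) - ((σ ⟨0, h⟩ : ℕ) : ℤ)| ≤ 1

/-- `sw n k` is the number of smooth words of length `n` over a `k`-letter alphabet. -/
noncomputable def sw (n k : ℕ) : ℕ := Nat.card {σ : Fin n → Fin k // IsSmooth σ}

/-- `scw n k` is the number of smooth cyclic words of length `n` over a `k`-letter
alphabet. -/
noncomputable def scw (n k : ℕ) : ℕ := Nat.card {σ : Fin n → Fin k // IsSmoothCyclic σ}

/-- Two words are rotation equivalent if one is a cyclic rotation of the other. -/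
def RotEquiv {n k : ℕ} (σ τ : Fin n → Fin k) : Prop :=
  ∃ r : Fin n, ∀ i : Fin n, σ i = τ (i + r)

/-- `sn n k` is the number of smooth necklaces of length `n` over a `k`-letter
alphabet, i.e. the number of rotation-equivalence classes of smooth cyclic words. -/
noncomputable def sn (n k : ℕ) : ℕ :=
  Nat.card (Quot (fun σ τ : {σ : Fin n → Fin k // IsSmoothCyclic σ} => RotEquiv σ.1 τ.1))

/-- `swF n k i` is the number of smooth words of length `n` over the alphabet
`{1,…,k}` whose first letter is `i` (letters of `Fin k` are `1`-indexed via `+1`). -/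
noncomputable def swF (n k i : ℕ) : ℕ :=
  Nat.card {σ : Fin n → Fin k // IsSmooth σ ∧ ∀ h : 0 < n, (σ ⟨0, h⟩ : ℕ) + 1 = i}

/-- `swFL n k i j` is the number of smooth words of length `n` over the alphabet
`{1,…,k}` with first letter `i` and last letter `j`. -/
noncomputable def swFL (n k i j : ℕ) : ℕ :=
  Nat.card {σ : Fin n → Fin k // IsSmooth σ ∧ ∀ h : 0 < n,
    (σ ⟨0, h⟩ : ℕ) + 1 = i ∧ (σ ⟨n - 1, Nat.sub_lt h Nat.one_pos⟩ : ℕ) + 1 = j}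

/-- Chebyshev polynomial of the second kind, as a real function, with integer index. -/
noncomputable def Ueval (r : ℤ) (t : ℝ) : ℝ := (Polynomial.Chebyshev.U ℝ r).eval t

/-- The number of smooth words of length `n + 1` over `Fin k` with first letter `a`. Lengths are
written as successors so that the first letter always exists. -/
noncomputable def swStart (n k : ℕ) (a : Fin k) : ℕ :=
  Nat.card {σ : Fin (n + 1) → Fin k // IsSmooth σ ∧ σ 0 = a}

lemma isSmooth_cons {n k : ℕ} (a : Fin k) (τ : Fin (n + 1) → Fin k) :
    IsSmooth (Fin.cons a τ : Fin (n + 2) → Fin k) ↔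
      IsSmooth τ ∧ |((τ 0 : ℕ) : ℤ) - ((a : ℕ) : ℤ)| ≤ 1 := by
  have hc (i : ℕ) (hi : i + 1 < n + 2) :
      (Fin.cons a τ : Fin (n + 2) → Fin k) ⟨i + 1, hi⟩ = τ ⟨i, by omega⟩ :=
    Fin.cons_succ (α := fun _ => Fin k) a τ ⟨i, by omega⟩
  have h0 (hi : 0 < n + 2) : (Fin.cons a τ : Fin (n + 2) → Fin k) ⟨0, hi⟩ = a :=
    Fin.cons_zero (α := fun _ => Fin k) a τ
  constructor
  · intro h
    refine ⟨fun i hi => ?_, ?_⟩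
    · have := h (i + 1) (by omega)
      rwa [hc, hc] at this
    · have := h 0 (by omega)
      rwa [hc, h0] at this
  · rintro ⟨h, hd⟩ i hi
    cases i with
    | zero => rw [hc, h0]; exact hd
    | succ i => rw [hc, hc]; exact h i (by omega)

open Classical in
/-- Smooth words whose first letter is constrained by `Q`, sorted by that letter. -/
lemma card_smooth_start (n k : ℕ) (Q : Fin k → Prop) :
    Nat.card {σ : Fin (n + 1) → Fin k // IsSmooth σ ∧ Q (σ 0)} =
      ∑ b : Fin k, if Q b then swStart n k b else 0 := by
  simp only [swStart, Nat.card_eq_fintype_card, Fintype.card_subtype]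
  rw [Finset.card_eq_sum_card_fiberwise (f := fun σ => σ 0) (t := Finset.univ)
    (fun _ _ => Finset.mem_coe.2 (Finset.mem_univ _))]
  refine Finset.sum_congr rfl fun b _ => ?_
  rw [Finset.filter_filter]
  split_ifs with hb
  · congr 1
    ext σ
    simp only [Finset.mem_filter, Finset.mem_univ, true_and]
    constructor
    · rintro ⟨⟨h, -⟩, rfl⟩
      exact ⟨h, rfl⟩
    · rintro ⟨h, rfl⟩
      exact ⟨⟨h, hb⟩, rfl⟩
  · rw [Finset.card_eq_zero, Finset.filter_eq_empty_iff]
    rintro σ - ⟨⟨-, h⟩, rfl⟩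
    exact hb h

/-- The transfer-matrix recurrence, obtained by deleting the first letter. -/
lemma swStart_succ (n k : ℕ) (a : Fin k) :
    swStart (n + 1) k a =
      ∑ b : Fin k, if |((b : ℕ) : ℤ) - ((a : ℕ) : ℤ)| ≤ 1 then swStart n k b else 0 := by
  classical
  have key := card_smooth_start n k (fun b => |((b : ℕ) : ℤ) - ((a : ℕ) : ℤ)| ≤ 1)
  calc swStart (n + 1) k a
      = Nat.card {τ : Fin (n + 1) → Fin k //
          IsSmooth τ ∧ |((τ 0 : ℕ) : ℤ) - ((a : ℕ) : ℤ)| ≤ 1} := by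
        refine Nat.card_congr
          { toFun := fun σ => ⟨Fin.tail σ.1, ?_⟩
            invFun := fun τ => ⟨Fin.cons a τ.1, (isSmooth_cons a τ.1).2 τ.2, rfl⟩
            left_inv := ?_
            right_inv := ?_ }
        · obtain ⟨σ, h, rfl⟩ := σ
          rw [← isSmooth_cons, Fin.cons_self_tail]
          exact h
        · rintro ⟨σ, h, rfl⟩
          exact Subtype.ext (Fin.cons_self_tail σ)
        · rintro ⟨τ, h⟩
          exact Subtype.ext (Fin.tail_cons (α := fun _ => Fin k) a τ)
    _ = _ := by
        rw [key]
        exact Finset.sum_congr rfl fun b _ => by congr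

lemma swStart_zero (k : ℕ) (a : Fin k) : swStart 0 k a = 1 := by
  rw [swStart, Nat.card_eq_one_iff_unique]
  refine ⟨⟨fun σ τ => Subtype.ext (funext fun i => ?_)⟩, ⟨fun _ => a, fun i hi => ?_, rfl⟩⟩
  · rw [Fin.fin_one_eq_zero i, σ.2.2, τ.2.2]
  · omega

lemma swStart_four (n : ℕ) :
    swStart n 4 0 = Nat.fib (2 * n + 1) ∧ swStart n 4 1 = Nat.fib (2 * n + 2) ∧
      swStart n 4 2 = Nat.fib (2 * n + 2) ∧ swStart n 4 3 = Nat.fib (2 * n + 1) := by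
  induction n with
  | zero => simp [swStart_zero]
  | succ n ih =>
    obtain ⟨h0, h1, h2, h3⟩ := ih
    have e1 : Nat.fib (2 * (n + 1) + 1) = Nat.fib (2 * n + 1) + Nat.fib (2 * n + 2) :=
      Nat.fib_add_two
    have e2 : Nat.fib (2 * (n + 1) + 2) = Nat.fib (2 * n + 2) + Nat.fib (2 * (n + 1) + 1) :=
      Nat.fib_add_two
    simp only [swStart_succ, Fin.sum_univ_four, h0, h1, h2, h3, e2, e1]
    norm_num [abs_le]
    omega

/-- The number of smooth words over a `4`-letter alphabet equals twice an
odd-indexed Fibonacci number. -/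
theorem smooth_words_four (n : ℕ) (hn : 1 ≤ n) :
    sw n 4 = 2 * Nat.fib (2 * n + 1) := by
  obtain ⟨n, rfl⟩ := Nat.exists_eq_add_of_le' hn
  have key := card_smooth_start n 4 (fun _ => True)
  simp only [and_true, if_true, Fin.sum_univ_four] at key
  obtain ⟨h0, h1, h2, h3⟩ := swStart_four n
  have e : Nat.fib (2 * (n + 1) + 1) = Nat.fib (2 * n + 1) + Nat.fib (2 * n + 2) :=
    Nat.fib_add_two
  rw [sw, key, h0, h1, h2, h3, e]
  ring
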